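/- arXiv:0808.0133 — 2 statements merged into one kernel-verified Lean document; each statement's English description precedes it below -/
import Mathlib

section
/- Let (A,B) ∈ SL(2,ℝ)² and suppose there exists a finite sequence (ε₁,…,ε_k) ∈ {+,−}^k (k ≥ 0) such that F_{ε_k}∘⋯∘F_{ε₁}(A,B) ∈ H_id. Then (A,B) is group-hyperbolic: there exist constants C > 0 and τ > 0 such that for every nontrivial element g of the free group on two generators, the matrix obtained by substituting A, B (and their inverses) for the generators in the reduced word of g has operator norm at least C·exp(τ·|g|), where |g| is the reduced word length. In particular, (A,B) is uniformly hyperbolic with respect to the full shift on two symbols: there exist C′ > 0 and λ > 1 such that every product of n ≥ 1 matrices, each factor equal to A or to B, has operator norm at least C′·λ^n. -/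
/-!
`F₊` and `F₋` are automorphisms of the free group applied to the generating pair, and they distort
word length by at most a factor of two, so group-hyperbolicity of the image passes back to the pair
(`groupHyp_of_changeOfGenerators`). It remains to treat a pair `(A, B)` in `Hid`.

Such a pair generates the group of a pair of pants: up to sign, `A = R₀ R₁` and `B = R₁ R₂`, where
the `Rᵢ` are reflections in three disjoint geodesics bounding a common region of the hyperbolic
plane (`groupHyp_of_mem_Hid`). Concretely the `Rᵢ` are traceless involutions of determinant `-1`
with `tr (Rᵢ Rⱼ) < -2` for `i ≠ j`. Let `Rⱼ` act on traceless matrices by `X ↦ -Rⱼ X Rⱼ`. In the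
coordinates `X = ∑ xₖ Rₖ` this fixes every coordinate except the `j`-th, which becomes
`-xⱼ - ∑ tr (Rₖ Rⱼ) xₖ` (sum over `k ≠ j`). Choose `μ > 1` with `μ + μ⁻¹ ≤ -tr (Rᵢ Rⱼ)` for all
`i ≠ j`. If the coordinates are nonnegative and the `i`-th exceeds the others by a factor `μ`, then
after reflecting in `Rⱼ`, `j ≠ i`, the same holds for the `j`-th, and it is `μ` times larger than
the old `i`-th (`ReflectionTriple.cone_step`).

A reduced word in `A, B` becomes a reduced word in the `Rᵢ` after cancelling factors `R₁ R₁`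
between neighbouring letters; each letter still contributes a factor `μ`
(`ReflectionTriple.state_word`). Hence conjugation by the matrix of a word of length `n` enlarges a
fixed matrix by at least a multiple of `μⁿ`. Since conjugation by `g ∈ SL(2,ℝ)` has norm of order
at most `‖g‖²`, the norm of the word grows at least like `μ^(n/2)`
(`groupHyp_of_reflections`). Positive words are reduced, which gives uniform hyperbolicity.
-/


open Matrix

noncomputable section

/-- `SL(2,ℝ)`. -/
abbrev SL2 := Matrix.SpecialLinearGroup (Fin 2) ℝ

/-- Operator norm of a `2 × 2` real matrix, induced by the Euclidean norm on `ℝ²`. -/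
noncomputable def opNorm (A : Matrix (Fin 2) (Fin 2) ℝ) : ℝ :=
  ‖Matrix.toEuclideanCLM (𝕜 := ℝ) A‖

/-- Trace of an element of `SL(2,ℝ)`. -/
def trace2 (A : SL2) : ℝ := Matrix.trace (A : Matrix (Fin 2) (Fin 2) ℝ)

/-- Topology on `SL(2,ℝ)` induced from the space of `2 × 2` real matrices. -/
instance : TopologicalSpace SL2 := instTopologicalSpaceSubtype

/-- The real projective line: quotient of `ℝ² ∖ {0}` by nonzero scalar multiplication. -/
abbrev P1 := Projectivization ℝ (Fin 2 → ℝ)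

/-- The quotient topology on the real projective line. -/
instance : TopologicalSpace P1 := instTopologicalSpaceQuotient

/-- The projective action of `SL(2,ℝ)` on the real projective line. -/
def projAct (A : SL2) : P1 → P1 :=
  Projectivization.map (Matrix.SpecialLinearGroup.toLin' A).toLinearMap
    (Matrix.SpecialLinearGroup.toLin' A).injective

/-- For a word `w = [i₁, …, iₙ]`, the product `A_{iₙ} ⋯ A_{i₁}`. -/
def wordProd {N : ℕ} (A : Fin N → SL2) (w : List (Fin N)) : SL2 :=
  (w.reverse.map A).prod

/-- Uniform hyperbolicity with respect to the full shift on `N` symbols: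
every product of `n` matrices has operator norm at least `C·λⁿ`. -/
def UnifHyp {N : ℕ} (A : Fin N → SL2) : Prop :=
  ∃ C > (0:ℝ), ∃ lam > (1:ℝ), ∀ w : List (Fin N), w ≠ [] →
    opNorm (wordProd A w : Matrix (Fin 2) (Fin 2) ℝ) ≥ C * lam ^ w.length

/-- Transitivity of the subshift of finite type given by the transition relation `T`:
any symbol can be joined to any other by an admissible word. -/
def TransitiveSubshift {N : ℕ} (T : Fin N → Fin N → Prop) : Prop :=
  ∀ α β : Fin N, ∃ w : List (Fin N), w ≠ [] ∧ w.Chain' T ∧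
    w.head? = some α ∧ w.getLast? = some β

/-- Uniform hyperbolicity with respect to the subshift determined by the
transition relation `T`. -/
def UnifHypSub {N : ℕ} (T : Fin N → Fin N → Prop) (A : Fin N → SL2) : Prop :=
  ∃ C > (0:ℝ), ∃ lam > (1:ℝ), ∀ w : List (Fin N), w ≠ [] → w.Chain' T →
    opNorm (wordProd A w : Matrix (Fin 2) (Fin 2) ℝ) ≥ C * lam ^ w.length

/-- For a word `w` in two letters (`true ↦ A`, `false ↦ B`), the corresponding
product of the matrices `A`, `B` (letters applied right-to-left). -/
def pairProd (A B : SL2) (w : List Bool) : SL2 :=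
  (w.reverse.map fun b => if b then A else B).prod

/-- Uniform hyperbolicity of a pair `(A,B)` with respect to the full shift on two symbols. -/
def UnifHypPair (A B : SL2) : Prop :=
  ∃ C > (0:ℝ), ∃ lam > (1:ℝ), ∀ w : List Bool, w ≠ [] →
    opNorm (pairProd A B w : Matrix (Fin 2) (Fin 2) ℝ) ≥ C * lam ^ w.length

/-- The hyperbolicity locus for the full shift on two symbols. -/
def UHpairs : Set (SL2 × SL2) := {p | UnifHypPair p.1 p.2}

/-- The set of pairs having an elliptic product. -/
def Epairs : Set (SL2 × SL2) :=
  {p | ∃ w : List Bool, w ≠ [] ∧ |trace2 (pairProd p.1 p.2 w)| < 2}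

/-- An open interval in the projective line: a nonempty open connected subset
whose complement contains more than one point. -/
def IsOpenInterval (I : Set P1) : Prop :=
  IsOpen I ∧ IsConnected I ∧ Iᶜ.Nontrivial

/-- `H₀`: pairs possessing a common strictly invariant open interval. -/
def H0 : Set (SL2 × SL2) :=
  {p | ∃ I : Set P1, IsOpenInterval I ∧
        projAct p.1 '' closure I ⊆ I ∧ projAct p.2 '' closure I ⊆ I}

/-- `H_id`: pairs with `|tr A| > 2`, `|tr B| > 2`, `|tr AB| > 2`, `tr A · tr B · tr AB < 0`. -/
def Hid : Set (SL2 × SL2) :=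
  {p | 2 < |trace2 p.1| ∧ 2 < |trace2 p.2| ∧ 2 < |trace2 (p.1 * p.2)| ∧
       trace2 p.1 * trace2 p.2 * trace2 (p.1 * p.2) < 0}

/-- `F₊(A,B) = (A, AB)`. -/
def Fplus (p : SL2 × SL2) : SL2 × SL2 := (p.1, p.1 * p.2)

/-- `F₋(A,B) = (BA, B)`. -/
def Fminus (p : SL2 × SL2) : SL2 × SL2 := (p.2 * p.1, p.2)

/-- `applySeq [ε₁, …, ε_k] = F_{ε_k} ∘ ⋯ ∘ F_{ε₁}`, where `true` stands for `+`
and `false` for `−`. -/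
def applySeq (s : List Bool) (p : SL2 × SL2) : SL2 × SL2 :=
  s.foldl (fun q e => if e then Fplus q else Fminus q) p

/-- A pair `(A,B)` is free if `|tr A| ≥ 2`, `|tr B| ≥ 2`, `|tr AB| ≥ 2` and
`tr A · tr B · tr AB < 0`. -/
def FreePair (p : SL2 × SL2) : Prop :=
  2 ≤ |trace2 p.1| ∧ 2 ≤ |trace2 p.2| ∧ 2 ≤ |trace2 (p.1 * p.2)| ∧
    trace2 p.1 * trace2 p.2 * trace2 (p.1 * p.2) < 0

/-- A pair is straight if it lies in the closure of `H₀`. -/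
def Straight (p : SL2 × SL2) : Prop := p ∈ closure H0

/-- A pair `(A,B)` is twisted if `|tr A| ≥ 2`, `|tr B| ≥ 2` and it is not straight. -/
def Twisted (p : SL2 × SL2) : Prop :=
  2 ≤ |trace2 p.1| ∧ 2 ≤ |trace2 p.2| ∧ ¬ Straight p

/-- A pair is almost hyperbolic if every image of it under the monoid generated by
`F₊`, `F₋` consists of two non-elliptic matrices. -/
def AlmostHyperbolic (p : SL2 × SL2) : Prop :=
  ∀ s : List Bool, 2 ≤ |trace2 (applySeq s p).1| ∧ 2 ≤ |trace2 (applySeq s p).2|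

/-- Group-hyperbolicity of a pair: exponential growth over all reduced words
in the free group on two generators (`true ↦ A`, `false ↦ B`). -/
def GroupHyp (A B : SL2) : Prop :=
  ∃ C > (0:ℝ), ∃ τ > (0:ℝ), ∀ g : FreeGroup Bool, g ≠ 1 →
    opNorm ((FreeGroup.lift (fun b => if b then A else B) g : SL2) :
        Matrix (Fin 2) (Fin 2) ℝ) ≥
      C * Real.exp (τ * (FreeGroup.toWord g).length)

/-- `M` has finitely many connected components, and distinct components have
disjoint closures. -/
def FinCompDisjClosures (M : Set P1) : Prop :=
  {C : Set P1 | ∃ x ∈ M, C = connectedComponentIn M x}.Finite ∧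
    ∀ x ∈ M, ∀ y ∈ M, connectedComponentIn M x ≠ connectedComponentIn M y →
      closure (connectedComponentIn M x) ∩ closure (connectedComponentIn M y) = ∅

end

/-! ### Traceless involutions of the plane -/

/-- Polarized Cayley–Hamilton identity for traceless `2 × 2` matrices. -/
lemma traceless_anticomm (M N : Matrix (Fin 2) (Fin 2) ℝ) (hM : M.trace = 0) (hN : N.trace = 0) :
    M * N + N * M = (M * N).trace • (1 : Matrix (Fin 2) (Fin 2) ℝ) := by
  rw [trace_fin_two] at hM hN
  have h1 : M 1 1 = -M 0 0 := by linarith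
  have h2 : N 1 1 = -N 0 0 := by linarith
  ext i j
  fin_cases i <;> fin_cases j <;> simp [mul_apply, Fin.sum_univ_two, trace_fin_two, h1, h2] <;> ring

lemma traceless_sq (M : Matrix (Fin 2) (Fin 2) ℝ) (hM : M.trace = 0) (hd : M.det = -1) :
    M * M = 1 := by
  rw [trace_fin_two] at hM
  rw [det_fin_two] at hd
  have h1 : M 1 1 = -M 0 0 := by linarith
  rw [h1] at hd
  ext i j
  fin_cases i <;> fin_cases j <;> simp [mul_apply, Fin.sum_univ_two, h1] <;> linarith

/-- Three traceless involutions `R i` of determinant `-1`, acting on the hyperbolic plane as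
reflections in three geodesics. The bound `tr (R i * R j) ≤ -(μ + μ⁻¹) < -2` says that the
geodesics are pairwise ultraparallel and bound a common region. -/
structure ReflectionTriple (R : Fin 3 → Matrix (Fin 2) (Fin 2) ℝ) (μ : ℝ) : Prop where
  one_lt : 1 < μ
  trace_eq : ∀ i, (R i).trace = 0
  det_eq : ∀ i, (R i).det = -1
  trace_mul_le : ∀ i j, i ≠ j → (R i * R j).trace ≤ -(μ + μ⁻¹)

/-- The reflection `X ↦ -R j X R j` on traceless matrices; it sends `R j` to `-R j`. -/
def reflAct (R : Fin 3 → Matrix (Fin 2) (Fin 2) ℝ) (j : Fin 3) (X : Matrix (Fin 2) (Fin 2) ℝ) :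
    Matrix (Fin 2) (Fin 2) ℝ := -(R j * X * R j)

/-- `X` is a nonnegative combination of the `R k` whose `i`-th coefficient is at least `h` and
exceeds each of the other coefficients by a factor of at least `μ`. -/
def Cone (R : Fin 3 → Matrix (Fin 2) (Fin 2) ℝ) (μ : ℝ) (i : Fin 3) (h : ℝ)
    (X : Matrix (Fin 2) (Fin 2) ℝ) : Prop :=
  ∃ x : Fin 3 → ℝ, X = ∑ k, x k • R k ∧ (∀ k, 0 ≤ x k) ∧ h ≤ x i ∧ ∀ k, k ≠ i → μ * x k ≤ x i

lemma Cone.mono {R : Fin 3 → Matrix (Fin 2) (Fin 2) ℝ} {μ : ℝ} {i : Fin 3} {h h' : ℝ}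
    {X : Matrix (Fin 2) (Fin 2) ℝ} (hX : Cone R μ i h X) (hh : h' ≤ h) : Cone R μ i h' X := by
  obtain ⟨x, h1, h2, h3, h4⟩ := hX
  exact ⟨x, h1, h2, hh.trans h3, h4⟩

namespace ReflectionTriple

variable {R : Fin 3 → Matrix (Fin 2) (Fin 2) ℝ} {μ : ℝ}

lemma sq (T : ReflectionTriple R μ) (j : Fin 3) : R j * R j = 1 := traceless_sq _ (T.trace_eq j) (T.det_eq j)

lemma trace_self (T : ReflectionTriple R μ) (j : Fin 3) : (R j * R j).trace = 2 := by
  rw [T.sq]; simp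

lemma reflAct_reflAct (T : ReflectionTriple R μ) (j : Fin 3) (X : Matrix (Fin 2) (Fin 2) ℝ) : reflAct R j (reflAct R j X) = X := by
  have : reflAct R j (reflAct R j X) = (R j * R j) * X * (R j * R j) := by
    simp only [reflAct, mul_neg, neg_mul, neg_neg, Matrix.mul_assoc]
  rw [this, T.sq, one_mul, mul_one]

lemma reflAct_generator (T : ReflectionTriple R μ) (j k : Fin 3) : reflAct R j (R k) = R k - (R k * R j).trace • R j := by
  have h := traceless_anticomm (R k) (R j) (T.trace_eq k) (T.trace_eq j)
  have h2 : R j * R k = (R k * R j).trace • (1 : Matrix (Fin 2) (Fin 2) ℝ) - R k * R j := by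
    rw [← h]; abel
  rw [reflAct, h2, sub_mul, Matrix.mul_assoc, T.sq, smul_mul_assoc, one_mul, mul_one, neg_sub]

/-- In the coordinates given by the `R k`, the reflection changes only the `j`-th coordinate. -/
lemma reflAct_sum (T : ReflectionTriple R μ) (j : Fin 3) (x : Fin 3 → ℝ) :
    reflAct R j (∑ k, x k • R k) =
      ∑ k, (x - (Pi.single j (∑ l, x l * (R l * R j).trace) : Fin 3 → ℝ)) k • R k := by
  have h1 : reflAct R j (∑ k, x k • R k) = ∑ k, x k • reflAct R j (R k) := by
    simp only [reflAct, Finset.mul_sum, Finset.sum_mul, mul_smul_comm, smul_mul_assoc, smul_neg,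
      Finset.sum_neg_distrib]
  rw [h1]
  simp only [T.reflAct_generator, Pi.sub_apply, sub_smul, smul_sub, Finset.sum_sub_distrib]
  congr 1
  symm
  rw [Finset.sum_eq_single j (fun k _ hk => by simp [Pi.single_eq_of_ne hk]) (by simp)]
  simp [Finset.sum_smul, smul_smul]

/-- The ping-pong step: a reflection in a different geodesic moves the dominant coordinate and
enlarges it by the factor `μ`. -/
lemma cone_step (T : ReflectionTriple R μ) {i j : Fin 3} (hij : i ≠ j) {h : ℝ} {X : Matrix (Fin 2) (Fin 2) ℝ}
    (hX : Cone R μ i h X) : Cone R μ j (μ * h) (reflAct R j X) := by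
  obtain ⟨x, rfl, h0, h1, h2⟩ := hX
  have hμ := T.one_lt
  have hμ0 : 0 < μ⁻¹ := by positivity
  have hμμ : μ * μ⁻¹ = 1 := mul_inv_cancel₀ (by positivity)
  obtain ⟨k, hki, hkj⟩ : ∃ k : Fin 3, k ≠ i ∧ k ≠ j := by
    clear * - hij
    revert i j; decide
  have hall : ∀ f : Fin 3 → ℝ, ∑ l, f l = f i + f j + f k := by
    intro f
    have : (Finset.univ : Finset (Fin 3)) = {i, j, k} := by
      clear * - hij hki hkj
      revert i j k; decide
    rw [this, Finset.sum_insert (by simp [hij, hki.symm]), Finset.sum_pair hkj.symm]; ring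
  have hcase : ∀ l : Fin 3, l ≠ j → l = i ∨ l = k := by
    clear * - hij hki hkj
    revert i j k; decide
  set S := ∑ l, x l * (R l * R j).trace with hS
  have hSle : S ≤ 2 * x j - (μ + μ⁻¹) * (x i + x k) := by
    rw [hS, hall, T.trace_self]
    have e1 := mul_le_mul_of_nonneg_left (T.trace_mul_le i j hij) (h0 i)
    have e2 := mul_le_mul_of_nonneg_left (T.trace_mul_le k j hkj) (h0 k)
    linarith
  have hxj : x j ≤ μ⁻¹ * x i := by
    have := mul_le_mul_of_nonneg_left (h2 j hij.symm) hμ0.le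
    calc x j = μ⁻¹ * (μ * x j) := by rw [← mul_assoc, mul_comm μ⁻¹, hμμ, one_mul]
      _ ≤ _ := this
  have hk0 := h0 k
  have hi0 := h0 i
  have hkμ : 0 ≤ μ⁻¹ * x k := by positivity
  have hkμ' : 0 ≤ μ * x k := by positivity
  have hiμ' : 0 ≤ μ * x i := by positivity
  -- the new dominant coordinate is `x j - S ≥ μ (x i + x k)`
  have key : μ * (x i + x k) ≤ x j - S := by nlinarith
  refine ⟨_, T.reflAct_sum j x, ?_, ?_, ?_⟩
  · intro l
    by_cases hl : l = j
    · subst hl; simp only [Pi.sub_apply, Pi.single_eq_same]; nlinarith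
    · simpa [Pi.single_eq_of_ne hl] using h0 l
  · simp only [Pi.sub_apply, Pi.single_eq_same]; nlinarith
  · intro l hl
    simp only [Pi.sub_apply, Pi.single_eq_same, Pi.single_eq_of_ne hl, sub_zero]
    rcases hcase l hl with rfl | rfl <;> nlinarith

lemma cone_base (T : ReflectionTriple R μ) (j : Fin 3) : Cone R μ j 1 (reflAct R j (∑ k, R k)) := by
  have hμ := T.one_lt
  have hμ0 : 0 < μ⁻¹ := by positivity
  have hμμ : μ * μ⁻¹ = 1 := mul_inv_cancel₀ (by positivity)
  have hsum := T.reflAct_sum j (fun _ => 1)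
  simp only [one_smul, one_mul] at hsum
  set S := ∑ l, (R l * R j).trace with hS
  have hSle : S ≤ 2 - 2 * (μ + μ⁻¹) := by
    have hs := T.trace_self j
    have ht := T.trace_mul_le
    rw [hS, Fin.sum_univ_three]
    fin_cases j
    · have := ht 1 0 (by decide); have := ht 2 0 (by decide); simp at hs ⊢; linarith
    · have := ht 0 1 (by decide); have := ht 2 1 (by decide); simp at hs ⊢; linarith
    · have := ht 0 2 (by decide); have := ht 1 2 (by decide); simp at hs ⊢; linarith
  have hkey : μ ≤ 1 - S := by nlinarith
  refine ⟨_, hsum, ?_, ?_, ?_⟩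
  · intro l
    by_cases hl : l = j
    · subst hl; simp only [Pi.sub_apply, Pi.single_eq_same]; linarith
    · simp [Pi.single_eq_of_ne hl]
  · simp only [Pi.sub_apply, Pi.single_eq_same]; linarith
  · intro l hl
    simp only [Pi.sub_apply, Pi.single_eq_same, Pi.single_eq_of_ne hl, sub_zero]; linarith

/-- The size of a matrix in a cone is detected by its pairing with any other reflection. -/
lemma cone_trace (T : ReflectionTriple R μ) {i j : Fin 3} (hij : i ≠ j) {h : ℝ} {X : Matrix (Fin 2) (Fin 2) ℝ}
    (hX : Cone R μ i h X) : (μ - μ⁻¹) * h ≤ |(X * R j).trace| := by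
  have hμ := T.one_lt
  have hμ0 : 0 < μ⁻¹ := by positivity
  have hμ1 : μ⁻¹ < 1 := inv_lt_one_of_one_lt₀ hμ
  have hμμ : μ * μ⁻¹ = 1 := mul_inv_cancel₀ (by positivity)
  obtain ⟨x, rfl, h0, h1, h2⟩ := hX
  obtain ⟨k, hki, hkj⟩ : ∃ k : Fin 3, k ≠ i ∧ k ≠ j := by
    clear * - hij
    revert i j; decide
  have hall : ∀ f : Fin 3 → ℝ, ∑ l, f l = f i + f j + f k := by
    intro f
    have : (Finset.univ : Finset (Fin 3)) = {i, j, k} := by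
      clear * - hij hki hkj
      revert i j k; decide
    rw [this, Finset.sum_insert (by simp [hij, hki.symm]), Finset.sum_pair hkj.symm]; ring
  have e : ((∑ l, x l • R l) * R j).trace = ∑ l, x l * (R l * R j).trace := by
    simp [Finset.sum_mul, trace_sum]
  rw [e, hall, T.trace_self]
  have e1 := mul_le_mul_of_nonneg_left (T.trace_mul_le i j hij) (h0 i)
  have e2 := mul_le_mul_of_nonneg_left (T.trace_mul_le k j hkj) (h0 k)
  have hxj : x j ≤ μ⁻¹ * x i := by
    have := mul_le_mul_of_nonneg_left (h2 j hij.symm) hμ0.le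
    calc x j = μ⁻¹ * (μ * x j) := by rw [← mul_assoc, mul_comm μ⁻¹, hμμ, one_mul]
      _ ≤ _ := this
  have hk0 : 0 ≤ (μ + μ⁻¹) * x k := mul_nonneg (by positivity) (h0 k)
  have e3 : (μ - μ⁻¹) * h ≤ (μ - μ⁻¹) * x i := mul_le_mul_of_nonneg_left h1 (by linarith)
  refine le_trans ?_ (neg_le_abs _)
  nlinarith

end ReflectionTriple

/-! ### Reduced words in the two generators -/

/-- The index of the reflection by which the generator `b` is obtained from `R 1`:
`A = ± R 0 * R 1` (`b = true`) and `B = ± R 1 * R 2` (`b = false`). -/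
def edge (b : Bool) : Fin 3 := if b then 0 else 2

lemma edge_ne_one (b : Bool) : edge b ≠ 1 := by cases b <;> decide

/-- The action of a letter on traceless matrices by conjugation, as a product of two reflections.
The letters `A = (true, true)` and `B⁻¹ = (false, false)` are `± R (edge b) * R 1`; their inverses
are `± R 1 * R (edge b)`. -/
def letterAct (R : Fin 3 → Matrix (Fin 2) (Fin 2) ℝ) (c : Bool × Bool)
    (X : Matrix (Fin 2) (Fin 2) ℝ) : Matrix (Fin 2) (Fin 2) ℝ :=
  if c.1 = c.2 then reflAct R (edge c.1) (reflAct R 1 X) else reflAct R 1 (reflAct R (edge c.1) X)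

/-- The region reached by words with leftmost letter `c`. For `c = A⁻¹, B`, equal to
`± R 1 * R (edge b)`, the reflection in `R 1` is undone first, since it cancels
against the next letter when that letter is `± R (edge b') * R 1`. -/
def State (R : Fin 3 → Matrix (Fin 2) (Fin 2) ℝ) (μ : ℝ) (c : Bool × Bool) (h : ℝ)
    (X : Matrix (Fin 2) (Fin 2) ℝ) : Prop :=
  if c.1 = c.2 then Cone R μ (edge c.1) h X else Cone R μ (edge c.1) h (reflAct R 1 X)

namespace ReflectionTriple

variable {R : Fin 3 → Matrix (Fin 2) (Fin 2) ℝ} {μ : ℝ}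

lemma state_base (T : ReflectionTriple R μ) (c : Bool × Bool) : State R μ c 1 (letterAct R c (∑ k, R k)) := by
  unfold State letterAct
  split_ifs with hc
  · exact (T.cone_step (edge_ne_one c.1).symm (T.cone_base 1)).mono (by linarith [T.one_lt])
  · rw [T.reflAct_reflAct]; exact T.cone_base _

lemma state_step (T : ReflectionTriple R μ) {c a : Bool × Bool} (hca : c.1 = a.1 → c.2 = a.2) {h : ℝ} (hh : 0 ≤ h)
    {X : Matrix (Fin 2) (Fin 2) ℝ} (hX : State R μ a h X) :
    State R μ c (μ * h) (letterAct R c X) := by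
  have hμ := T.one_lt
  have hmono : μ * h ≤ μ * (μ * h) := by
    have : 0 ≤ μ * h := by positivity
    nlinarith
  have hedge : ¬ (c.1 = c.2 ↔ a.1 = a.2) → edge a.1 ≠ edge c.1 := by
    clear * - hca
    revert hca; revert c a; decide
  unfold State at *
  unfold letterAct
  by_cases ha : a.1 = a.2 <;> by_cases hc : c.1 = c.2 <;> simp only [ha, hc, if_true, if_false] at *
  · have h1 := T.cone_step (edge_ne_one _) hX
    exact (T.cone_step (edge_ne_one _).symm h1).mono hmono
  · rw [T.reflAct_reflAct]
    exact T.cone_step (hedge (by simp)) hX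
  · exact T.cone_step (hedge (by simp)) hX
  · have h1 := T.cone_step (edge_ne_one _) hX
    rw [T.reflAct_reflAct] at h1 ⊢
    exact (T.cone_step (edge_ne_one _).symm h1).mono hmono

lemma state_word (T : ReflectionTriple R μ) (L : List (Bool × Bool)) (c : Bool × Bool)
    (hL : FreeGroup.IsReduced (c :: L)) :
    State R μ c (μ ^ L.length) ((c :: L).foldr (letterAct R) (∑ k, R k)) := by
  induction L generalizing c with
  | nil => simpa using T.state_base c
  | cons a L ih =>
    rw [FreeGroup.isReduced_cons_cons] at hL
    have hpos : 0 ≤ μ ^ L.length := by have := T.one_lt; positivity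
    have := T.state_step hL.1 hpos (ih a hL.2)
    rw [List.length_cons, pow_succ', List.foldr_cons]
    exact this

/-- In a state of size `h`, some pairing with an `R j` is at least a fixed multiple of `h`. -/
lemma state_trace (T : ReflectionTriple R μ) {c : Bool × Bool} {h : ℝ} (hh : 0 ≤ h) {X : Matrix (Fin 2) (Fin 2) ℝ}
    (hX : State R μ c h X) : ∃ j, (μ - μ⁻¹) * h ≤ |(X * R j).trace| := by
  have hμ := T.one_lt
  unfold State at hX
  split_ifs at hX
  · exact ⟨1, T.cone_trace (edge_ne_one _) hX⟩
  · have h1 := T.cone_step (edge_ne_one _) hX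
    rw [T.reflAct_reflAct] at h1
    exact ⟨0, T.cone_trace (by decide) (h1.mono (by nlinarith))⟩

end ReflectionTriple

/-! ### Norm estimates -/

/-- The `ℓ¹` norm of the entries, an auxiliary submultiplicative norm. -/
def entrySum (M : Matrix (Fin 2) (Fin 2) ℝ) : ℝ := |M 0 0| + |M 0 1| + |M 1 0| + |M 1 1|

lemma entrySum_nonneg (M : Matrix (Fin 2) (Fin 2) ℝ) : 0 ≤ entrySum M := by
  unfold entrySum; positivity

lemma entrySum_mul_le (M N : Matrix (Fin 2) (Fin 2) ℝ) :
    entrySum (M * N) ≤ entrySum M * entrySum N := by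
  have h : ∀ i j, |(M * N) i j| ≤ |M i 0| * |N 0 j| + |M i 1| * |N 1 j| := by
    intro i j
    rw [mul_apply, Fin.sum_univ_two, ← abs_mul, ← abs_mul]
    exact abs_add_le _ _
  have h00 := h 0 0
  have h01 := h 0 1
  have h10 := h 1 0
  have h11 := h 1 1
  have hp : ∀ i j k l, 0 ≤ |M i j| * |N k l| := fun i j k l => by positivity
  unfold entrySum
  nlinarith [hp 0 0 1 0, hp 0 0 1 1, hp 0 1 0 0, hp 0 1 0 1, hp 1 0 1 0, hp 1 0 1 1,
    hp 1 1 0 0, hp 1 1 0 1]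

lemma abs_trace_le_entrySum (M : Matrix (Fin 2) (Fin 2) ℝ) : |M.trace| ≤ entrySum M := by
  rw [trace_fin_two]
  unfold entrySum
  have := abs_add_le (M 0 0) (M 1 1)
  have := abs_nonneg (M 0 1)
  have := abs_nonneg (M 1 0)
  linarith

lemma entrySum_inv (g : SL2) :
    entrySum ((g⁻¹ : SL2) : Matrix (Fin 2) (Fin 2) ℝ) =
      entrySum (g : Matrix (Fin 2) (Fin 2) ℝ) := by
  rw [Matrix.SpecialLinearGroup.coe_inv, adjugate_fin_two]
  simp [entrySum]
  ring

lemma abs_entry_le_opNorm (M : Matrix (Fin 2) (Fin 2) ℝ) (i j : Fin 2) : |M i j| ≤ opNorm M := by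
  have h1 := (Matrix.toEuclideanCLM (𝕜 := ℝ) M).le_opNorm (EuclideanSpace.single j (1 : ℝ))
  have h2 := PiLp.norm_apply_le
    (Matrix.toEuclideanCLM (𝕜 := ℝ) M (EuclideanSpace.single j (1 : ℝ))) i
  have h3 : (Matrix.toEuclideanCLM (𝕜 := ℝ) M (EuclideanSpace.single j (1 : ℝ))) i = M i j := by
    have hs : EuclideanSpace.single j (1 : ℝ) = WithLp.toLp 2 (Pi.single j 1) := rfl
    rw [hs, Matrix.toEuclideanCLM_toLp]
    simp
  rw [h3, Real.norm_eq_abs] at h2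
  simpa [opNorm] using h2.trans h1

lemma entrySum_le_opNorm (M : Matrix (Fin 2) (Fin 2) ℝ) : entrySum M ≤ 4 * opNorm M := by
  have h := abs_entry_le_opNorm M
  unfold entrySum
  linarith [h 0 0, h 0 1, h 1 0, h 1 1]

/-! ### Group-hyperbolicity of products of reflections -/

/-- Conjugation by a product of letters is the composition of the letter actions. -/
lemma conj_word {R : Fin 3 → Matrix (Fin 2) (Fin 2) ℝ} {m : Bool × Bool → SL2}
    (hm : ∀ c X, (m c : Matrix (Fin 2) (Fin 2) ℝ) * X *
      ((m c)⁻¹ : SL2) = letterAct R c X) (L : List (Bool × Bool))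
    (X : Matrix (Fin 2) (Fin 2) ℝ) :
    ((L.map m).prod : SL2).1 * X * ((L.map m).prod⁻¹ : SL2).1 = L.foldr (letterAct R) X := by
  induction L with
  | nil => simp
  | cons c L ih =>
    rw [List.foldr_cons, ← ih, ← hm]
    simp only [List.map_cons, List.prod_cons, _root_.mul_inv_rev]
    simp only [Matrix.SpecialLinearGroup.coe_mul, Matrix.mul_assoc]

lemma letter_conj {R : Fin 3 → Matrix (Fin 2) (Fin 2) ℝ} {μ : ℝ} (T : ReflectionTriple R μ)
    {A B : SL2} {α β : ℝ} (hα : α * α = 1) (hβ : β * β = 1)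
    (hA : (A : Matrix (Fin 2) (Fin 2) ℝ) = α • (R 0 * R 1))
    (hB : (B : Matrix (Fin 2) (Fin 2) ℝ) = β • (R 1 * R 2))
    (c : Bool × Bool) (X : Matrix (Fin 2) (Fin 2) ℝ) :
    ((cond c.2 (if c.1 then A else B) (if c.1 then A else B)⁻¹ : SL2) :
      Matrix (Fin 2) (Fin 2) ℝ) * X *
      ((cond c.2 (if c.1 then A else B) (if c.1 then A else B)⁻¹)⁻¹ : SL2) = letterAct R c X := by
  have hinv : ∀ (g : SL2) (γ : ℝ) (i j : Fin 3), γ * γ = 1 →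
      (g : Matrix (Fin 2) (Fin 2) ℝ) = γ • (R i * R j) →
      ((g⁻¹ : SL2) : Matrix (Fin 2) (Fin 2) ℝ) = γ • (R j * R i) := by
    intro g γ i j hγ hg
    have h1 : (g : Matrix (Fin 2) (Fin 2) ℝ) * ((g⁻¹ : SL2) : Matrix (Fin 2) (Fin 2) ℝ) = 1 := by
      rw [← Matrix.SpecialLinearGroup.coe_mul, mul_inv_cancel, Matrix.SpecialLinearGroup.coe_one]
    refine (left_inv_eq_right_inv ?_ h1).symm
    rw [hg, smul_mul_smul_comm, hγ, one_smul, Matrix.mul_assoc, ← Matrix.mul_assoc (R i), T.sq,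
      one_mul, T.sq]
  have hgen : ∀ (γ : ℝ) (i j : Fin 3), γ * γ = 1 →
      (γ • (R i * R j)) * X * (γ • (R j * R i)) = reflAct R i (reflAct R j X) := by
    intro γ i j hγ
    rw [smul_mul_assoc, smul_mul_smul_comm, hγ, one_smul]
    simp only [reflAct, mul_neg, neg_mul, neg_neg, Matrix.mul_assoc]
  have hA' := hinv A α 0 1 hα hA
  have hB' := hinv B β 1 2 hβ hB
  obtain ⟨b, s⟩ := c
  cases b <;> cases s <;> simp only [cond_true, cond_false, if_true, inv_inv, letterAct, edge,
    Bool.false_eq_true, if_false, Bool.true_eq_false]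
  · rw [hB, hB']; exact hgen _ _ _ hβ
  · rw [hB, hB']; exact hgen _ _ _ hβ
  · rw [hA, hA']; exact hgen _ _ _ hα
  · rw [hA, hA']; exact hgen _ _ _ hα

/-- The word `g` carries `∑ k, R k` to a matrix whose pairing with some `R j` is at least of order
`μ ^ |g|`, while conjugation by a matrix of norm `N` enlarges by at most a multiple of `N ^ 2`. -/
lemma groupHyp_of_reflections {R : Fin 3 → Matrix (Fin 2) (Fin 2) ℝ} {μ : ℝ}
    (T : ReflectionTriple R μ) {A B : SL2} {α β : ℝ} (hα : α * α = 1) (hβ : β * β = 1)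
    (hA : (A : Matrix (Fin 2) (Fin 2) ℝ) = α • (R 0 * R 1))
    (hB : (B : Matrix (Fin 2) (Fin 2) ℝ) = β • (R 1 * R 2)) : GroupHyp A B := by
  have hμ := T.one_lt
  have hμ1 : μ⁻¹ < 1 := inv_lt_one_of_one_lt₀ hμ
  have hlog : 0 < Real.log μ := Real.log_pos hμ
  set K : ℝ := 1 + 16 * entrySum (∑ k, R k) * ∑ j, entrySum (R j) with hK
  have hsumpos : 0 ≤ ∑ j, entrySum (R j) := Finset.sum_nonneg fun j _ => entrySum_nonneg _
  have hX0 := entrySum_nonneg (∑ k, R k)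
  have hKpos : 0 < K := by positivity
  have hκ : 0 < (μ - μ⁻¹) * μ⁻¹ / K := by
    have : 0 < μ - μ⁻¹ := by linarith
    positivity
  refine ⟨√((μ - μ⁻¹) * μ⁻¹ / K), Real.sqrt_pos.2 hκ, Real.log μ / 2, by positivity, ?_⟩
  intro g hg
  set f : Bool → SL2 := fun b => if b then A else B with hf
  set N := opNorm ((FreeGroup.lift f g : SL2) : Matrix (Fin 2) (Fin 2) ℝ) with hN
  have hN0 : 0 ≤ N := norm_nonneg _
  have hred : FreeGroup.IsReduced g.toWord := FreeGroup.isReduced_toWord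
  have hlift : FreeGroup.lift f g =
      (g.toWord.map fun c => cond c.2 (f c.1) (f c.1)⁻¹).prod := by
    conv_lhs => rw [← FreeGroup.mk_toWord (x := g), FreeGroup.lift_mk]
  obtain ⟨c, L, hL⟩ : ∃ c L, g.toWord = c :: L :=
    List.exists_cons_of_ne_nil (fun h => hg (FreeGroup.toWord_eq_nil_iff.1 h))
  have hconj := conj_word (R := R) (m := fun c => cond c.2 (f c.1) (f c.1)⁻¹)
    (fun c X => letter_conj T hα hβ hA hB c X) g.toWord (∑ k, R k)
  rw [← hlift] at hconj
  rw [hL] at hred hconj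
  have hst := T.state_word L c hred
  rw [← hconj] at hst
  obtain ⟨j, hj⟩ := T.state_trace (by positivity) hst
  have hE := entrySum_le_opNorm ((FreeGroup.lift f g : SL2) : Matrix (Fin 2) (Fin 2) ℝ)
  rw [← hN] at hE
  have hup : |((FreeGroup.lift f g : SL2).1 * (∑ k, R k) * ((FreeGroup.lift f g)⁻¹ : SL2).1 *
      R j).trace| ≤ K * N ^ 2 := by
    have hRj : entrySum (R j) ≤ ∑ j, entrySum (R j) :=
      Finset.single_le_sum (f := fun j => entrySum (R j)) (fun j _ => entrySum_nonneg _)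
        (Finset.mem_univ j)
    calc _ ≤ entrySum _ := abs_trace_le_entrySum _
      _ ≤ _ := entrySum_mul_le _ _
      _ ≤ (4 * N * entrySum (∑ k, R k) * (4 * N)) * ∑ j, entrySum (R j) := by
        refine mul_le_mul ?_ hRj (entrySum_nonneg _) (by positivity)
        refine (entrySum_mul_le _ _).trans ?_
        refine mul_le_mul ?_ ((entrySum_inv _).le.trans hE) (entrySum_nonneg _) (by positivity)
        exact (entrySum_mul_le _ _).trans (mul_le_mul_of_nonneg_right hE hX0)
      _ = (16 * entrySum (∑ k, R k) * ∑ j, entrySum (R j)) * N ^ 2 := by ring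
      _ ≤ K * N ^ 2 := mul_le_mul_of_nonneg_right (by rw [hK]; linarith) (sq_nonneg _)
  have hmain : (μ - μ⁻¹) * μ ^ L.length ≤ K * N ^ 2 := hj.trans hup
  rw [ge_iff_le]
  refine (sq_le_sq₀ (by positivity) hN0).1 ?_
  rw [mul_pow, Real.sq_sqrt hκ.le, ← Real.exp_nat_mul]
  have hexp : Real.exp ((2 : ℕ) * (Real.log μ / 2 * (g.toWord.length : ℝ))) =
      μ ^ (L.length + 1) := by
    rw [hL, List.length_cons, ← Real.exp_log (show 0 < μ ^ (L.length + 1) by positivity),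
      Real.log_pow]
    congr 1; push_cast; ring
  rw [hexp, div_mul_eq_mul_div, div_le_iff₀ hKpos]
  calc (μ - μ⁻¹) * μ⁻¹ * μ ^ (L.length + 1) = (μ - μ⁻¹) * μ ^ L.length := by
        rw [pow_succ]; field_simp
    _ ≤ N ^ 2 * K := by linarith

/-! ### The reflections attached to a pair in `Hid` -/

lemma det_commutator (A B : Matrix (Fin 2) (Fin 2) ℝ) (hA : A.det = 1) (hB : B.det = 1) :
    (A * B - B * A).det =
      4 - A.trace ^ 2 - B.trace ^ 2 - (A * B).trace ^ 2 + A.trace * B.trace * (A * B).trace := by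
  rw [det_fin_two] at hA hB
  simp only [det_fin_two, trace_fin_two, Matrix.sub_apply, mul_apply, Fin.sum_univ_two]
  linear_combination (4 * (B 0 0 * B 1 1 - B 0 1 * B 1 0) - (B 0 0 + B 1 1) ^ 2) * hA +
    (4 - (A 0 0 + A 1 1) ^ 2) * hB

lemma exists_sign (x : ℝ) : ∃ α : ℝ, α * α = 1 ∧ α * x = -|x| := by
  rcases le_total 0 x with h | h
  · exact ⟨-1, by norm_num, by rw [abs_of_nonneg h]; ring⟩
  · exact ⟨1, by norm_num, by rw [abs_of_nonpos h]; ring⟩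

/-- The middle reflection is the normalized commutator `AB - BA`, which conjugates `A` to `A⁻¹` and
`B` to `B⁻¹`; its square is a positive scalar because the three traces exceed `2` in
absolute value and have negative product. Writing `q` for the middle reflection, the other two are
`± A q` and `± q B`, with signs chosen so that all three traces `tr (R i * R j)` are below `-2`. -/
lemma groupHyp_of_mem_Hid {A B : SL2} (h : (A, B) ∈ Hid) : GroupHyp A B := by
  obtain ⟨hx, hy, hz, hneg⟩ := h
  simp only [trace2, Matrix.SpecialLinearGroup.coe_mul] at hx hy hz hneg
  obtain ⟨a, ha⟩ : ∃ a : Matrix (Fin 2) (Fin 2) ℝ, a = A := ⟨_, rfl⟩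
  obtain ⟨b, hb⟩ : ∃ b : Matrix (Fin 2) (Fin 2) ℝ, b = B := ⟨_, rfl⟩
  have hda : a.det = 1 := by rw [ha]; exact A.2
  have hdb : b.det = 1 := by rw [hb]; exact B.2
  rw [← ha, ← hb] at hz hneg
  rw [← ha] at hx
  rw [← hb] at hy
  set x := a.trace
  set y := b.trace
  set z := (a * b).trace
  have sq4 : ∀ t : ℝ, 2 < |t| → 4 < t ^ 2 := fun t ht => by
    rw [← sq_abs]; nlinarith
  have hdet : (a * b - b * a).det < 0 := by
    rw [det_commutator a b hda hdb]
    linarith [sq4 x hx, sq4 y hy, sq4 z hz]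
  obtain ⟨α, hα, hαx⟩ := exists_sign x
  obtain ⟨β, hβ, hβy⟩ := exists_sign y
  have hαβz : α * β * z < -2 := by
    have h1 : (α * x) * (β * y) * (α * β * z) = (α * α) * (β * β) * (x * y * z) := by ring
    rw [hα, hβ, hαx, hβy] at h1
    have h2 : 4 < |x| * |y| := by nlinarith
    have h3 : α * β * z < 0 := by
      by_contra hcon
      push Not at hcon
      nlinarith [mul_nonneg (show 0 ≤ |x| * |y| by positivity) hcon]
    have h4 : (α * β * z) ^ 2 = z ^ 2 := by
      calc (α * β * z) ^ 2 = (α * α) * (β * β) * z ^ 2 := by ring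
        _ = z ^ 2 := by rw [hα, hβ]; ring
    nlinarith [sq4 z hz]
  set D := -(a * b - b * a).det with hD
  have hDpos : 0 < D := by linarith
  obtain ⟨q, hq⟩ : ∃ q : Matrix (Fin 2) (Fin 2) ℝ, q = (√D)⁻¹ • (a * b - b * a) := ⟨_, rfl⟩
  have hsq : (√D)⁻¹ ^ 2 * D = 1 := by
    rw [inv_pow, Real.sq_sqrt hDpos.le, inv_mul_cancel₀ hDpos.ne']
  have hqdet : q.det = -1 := by
    rw [hq, det_smul, Fintype.card_fin]; linarith
  have hqtr : q.trace = 0 := by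
    rw [hq, trace_smul, trace_sub, trace_mul_comm a b]; simp
  have hqq : q * q = 1 := traceless_sq q hqtr hqdet
  have haq : (a * q).trace = 0 := by
    rw [hq, mul_smul_comm, trace_smul, mul_sub, trace_sub, ← Matrix.mul_assoc a b a,
      trace_mul_comm (a * b) a]
    simp
  have hqb : (q * b).trace = 0 := by
    rw [hq, smul_mul_assoc, trace_smul, sub_mul, trace_sub, Matrix.mul_assoc b a b,
      trace_mul_comm b (a * b)]
    simp
  -- `ε = min (c - 2) 1` gives `(1 + ε) + (1 + ε)⁻¹ ≤ 2 + ε² ≤ c`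
  obtain ⟨μ, hμ, hμx, hμy, hμz⟩ : ∃ μ : ℝ, 1 < μ ∧ μ + μ⁻¹ ≤ |x| ∧ μ + μ⁻¹ ≤ |y| ∧
      μ + μ⁻¹ ≤ -(α * β * z) := by
    set ε := min (min (|x| - 2) (|y| - 2)) (min (-(α * β * z) - 2) 1)
    have e0 : 0 < ε := by
      refine lt_min (lt_min ?_ ?_) (lt_min ?_ ?_) <;> linarith
    have e1 : ε ≤ |x| - 2 := (min_le_left _ _).trans (min_le_left _ _)
    have e2 : ε ≤ |y| - 2 := (min_le_left _ _).trans (min_le_right _ _)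
    have e3 : ε ≤ -(α * β * z) - 2 := (min_le_right _ _).trans (min_le_left _ _)
    have e4 : ε ≤ 1 := (min_le_right _ _).trans (min_le_right _ _)
    have e5 : (1 + ε)⁻¹ ≤ 1 - ε + ε ^ 2 := by
      rw [inv_le_iff_one_le_mul₀ (by linarith)]
      nlinarith [pow_pos e0 3]
    have e6 : (1 + ε) + (1 + ε)⁻¹ ≤ 2 + ε := by nlinarith
    exact ⟨1 + ε, by linarith, by linarith, by linarith, by linarith⟩
  have t01 : (α • (a * q) * q).trace = α * x := by
    rw [smul_mul_assoc, Matrix.mul_assoc, hqq, mul_one, trace_smul, smul_eq_mul]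
  have t12 : (q * β • (q * b)).trace = β * y := by
    rw [mul_smul_comm, ← Matrix.mul_assoc, hqq, one_mul, trace_smul, smul_eq_mul]
  have t02 : (α • (a * q) * β • (q * b)).trace = α * β * z := by
    rw [smul_mul_smul_comm, Matrix.mul_assoc, ← Matrix.mul_assoc q q, hqq, one_mul, trace_smul,
      smul_eq_mul]
  have T : ReflectionTriple ![α • (a * q), q, β • (q * b)] μ := by
    refine ⟨hμ, ?_, ?_, ?_⟩
    · intro i
      fin_cases i
      · simp [haq]
      · simpa using hqtr
      · simp [hqb]
    · intro i
      fin_cases i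
      · change (α • (a * q)).det = -1
        rw [det_smul, Fintype.card_fin, det_mul, hda, hqdet]
        linear_combination -hα
      · simpa using hqdet
      · change (β • (q * b)).det = -1
        rw [det_smul, Fintype.card_fin, det_mul, hdb, hqdet]
        linear_combination -hβ
    · have s01 : (α • (a * q) * q).trace ≤ -(μ + μ⁻¹) := by rw [t01]; linarith
      have s12 : (q * β • (q * b)).trace ≤ -(μ + μ⁻¹) := by rw [t12]; linarith
      have s02 : (α • (a * q) * β • (q * b)).trace ≤ -(μ + μ⁻¹) := by rw [t02]; linarith
      intro i j hij
      fin_cases i <;> fin_cases j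
      · exact absurd rfl hij
      · exact s01
      · exact s02
      · exact (trace_mul_comm _ _).trans_le s01
      · exact absurd rfl hij
      · exact s12
      · exact (trace_mul_comm _ _).trans_le s02
      · exact (trace_mul_comm _ _).trans_le s12
      · exact absurd rfl hij
  refine groupHyp_of_reflections T hα hβ ?_ ?_
  · change (A : Matrix (Fin 2) (Fin 2) ℝ) = α • (α • (a * q) * q)
    rw [smul_mul_assoc, smul_smul, hα, one_smul, Matrix.mul_assoc, hqq, mul_one, ha]
  · change (B : Matrix (Fin 2) (Fin 2) ℝ) = β • (q * β • (q * b))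
    rw [mul_smul_comm, smul_smul, hβ, one_smul, ← Matrix.mul_assoc, hqq, one_mul, hb]

/-! ### Change of generators and positive words -/

lemma norm_map_le (φ : FreeGroup Bool →* FreeGroup Bool)
    (hφ : ∀ b, (φ (FreeGroup.of b)).norm ≤ 2) (g : FreeGroup Bool) :
    (φ g).norm ≤ 2 * g.norm := by
  have key : ∀ L : List (Bool × Bool), (φ (FreeGroup.mk L)).norm ≤ 2 * L.length := by
    intro L
    induction L with
    | nil => simp [← FreeGroup.one_eq_mk]
    | cons c L ih =>
      have hc : (φ (FreeGroup.mk [c])).norm ≤ 2 := by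
        obtain ⟨b, s⟩ := c
        cases s
        · have : FreeGroup.mk [(b, false)] = (FreeGroup.of b)⁻¹ := rfl
          rw [this, map_inv, FreeGroup.norm_inv_eq]; exact hφ b
        · exact hφ b
      have hmul : FreeGroup.mk (c :: L) = FreeGroup.mk [c] * FreeGroup.mk L := by
        rw [FreeGroup.mul_mk]; rfl
      rw [hmul, map_mul, List.length_cons]
      have := FreeGroup.norm_mul_le (φ (FreeGroup.mk [c])) (φ (FreeGroup.mk L))
      omega
  have := key g.toWord
  rwa [FreeGroup.mk_toWord] at this

/-- Group-hyperbolicity is inherited along a change of generators of the free group: `ψ` rewrites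
words in `A, B` as words in `A', B'`, and its left inverse `φ` at most doubles the length. -/
lemma groupHyp_of_changeOfGenerators {A B A' B' : SL2} (φ ψ : FreeGroup Bool →* FreeGroup Bool)
    (hφ : ∀ b, (φ (FreeGroup.of b)).norm ≤ 2) (hφψ : φ.comp ψ = MonoidHom.id _)
    (hψ : (FreeGroup.lift fun b => if b then A' else B').comp ψ =
      FreeGroup.lift fun b => if b then A else B)
    (h : GroupHyp A' B') : GroupHyp A B := by
  obtain ⟨C, hC, τ, hτ, H⟩ := h
  refine ⟨C, hC, τ / 2, by positivity, fun g hg => ?_⟩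
  have hinv : φ (ψ g) = g := DFunLike.congr_fun hφψ g
  have hne : ψ g ≠ 1 := fun h1 => hg (by rw [← hinv, h1, map_one])
  have hlen : ((FreeGroup.toWord g).length : ℝ) ≤ 2 * (FreeGroup.toWord (ψ g)).length := by
    have := norm_map_le φ hφ (ψ g)
    rw [hinv] at this
    exact_mod_cast this
  have hval : FreeGroup.lift (fun b => if b then A' else B') (ψ g) =
      FreeGroup.lift (fun b => if b then A else B) g := DFunLike.congr_fun hψ g
  have := H (ψ g) hne
  rw [hval] at this
  refine le_trans ?_ this
  refine mul_le_mul_of_nonneg_left (Real.exp_le_exp.2 ?_) hC.le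
  nlinarith

lemma groupHyp_of_Fplus {A B : SL2} (h : GroupHyp A (A * B)) : GroupHyp A B := by
  refine groupHyp_of_changeOfGenerators
    (FreeGroup.lift fun b => if b then FreeGroup.of true else FreeGroup.of true * FreeGroup.of false)
    (FreeGroup.lift fun b =>
      if b then FreeGroup.of true else (FreeGroup.of true)⁻¹ * FreeGroup.of false)
    ?_ ?_ ?_ h
  · intro b
    cases b
    · simpa using FreeGroup.norm_mul_le (FreeGroup.of true) (FreeGroup.of false)
    · simp
  · ext b; cases b <;> simp
  · refine FreeGroup.ext_hom _ _ fun b => ?_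
    cases b <;> simp

lemma groupHyp_of_Fminus {A B : SL2} (h : GroupHyp (B * A) B) : GroupHyp A B := by
  refine groupHyp_of_changeOfGenerators
    (FreeGroup.lift fun b => if b then FreeGroup.of false * FreeGroup.of true else FreeGroup.of false)
    (FreeGroup.lift fun b =>
      if b then (FreeGroup.of false)⁻¹ * FreeGroup.of true else FreeGroup.of false)
    ?_ ?_ ?_ h
  · intro b
    cases b
    · simp
    · simpa using FreeGroup.norm_mul_le (FreeGroup.of false) (FreeGroup.of true)
  · ext b; cases b <;> simp
  · refine FreeGroup.ext_hom _ _ fun b => ?_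
    cases b <;> simp

lemma groupHyp_of_applySeq (s : List Bool) (p : SL2 × SL2) (h : applySeq s p ∈ Hid) :
    GroupHyp p.1 p.2 := by
  induction s generalizing p with
  | nil => exact groupHyp_of_mem_Hid h
  | cons e s ih =>
    have := ih _ h
    cases e
    · exact groupHyp_of_Fminus this
    · exact groupHyp_of_Fplus this

/-- Positive words are reduced, so group-hyperbolicity bounds their products from below. -/
lemma GroupHyp.unifHypPair {A B : SL2} (h : GroupHyp A B) : UnifHypPair A B := by
  obtain ⟨C, hC, τ, hτ, H⟩ := h
  refine ⟨C, hC, Real.exp τ, Real.one_lt_exp_iff.2 hτ, fun w hw => ?_⟩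
  set L : List (Bool × Bool) := w.reverse.map fun b => (b, true) with hL
  have hred : FreeGroup.IsReduced L := by
    rw [hL, FreeGroup.IsReduced, List.isChain_map]
    exact List.Pairwise.isChain (List.pairwise_of_forall (by simp))
  have hword : (FreeGroup.mk L).toWord = L := by
    rw [FreeGroup.toWord_mk, hred.reduce_eq]
  have hne : FreeGroup.mk L ≠ 1 := by
    rw [Ne, ← FreeGroup.toWord_eq_nil_iff, hword]
    simpa [hL] using hw
  have := H _ hne
  rw [hword, FreeGroup.lift_mk, hL, List.map_map, List.length_map, List.length_reverse] at this
  rw [← Real.exp_nat_mul, mul_comm _ τ]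
  exact this

/-- **Monoid preimages of `H_id` are group-hyperbolic, hence uniformly
hyperbolic** (Proposition 3.7 of Avila–Bochi–Yoccoz). -/
theorem monoid_preimage_hyperbolic (A B : SL2)
    (h : ∃ s : List Bool, applySeq s (A, B) ∈ Hid) :
    GroupHyp A B ∧ UnifHypPair A B := by
  obtain ⟨s, hs⟩ := h
  have hG : GroupHyp A B := groupHyp_of_applySeq s (A, B) hs
  exact ⟨hG, hG.unifHypPair⟩
end

section
/- Every free pair in SL(2,ℝ)² is twisted. Moreover, a pair (A,B) ∈ SL(2,ℝ)² is free if and only if it belongs to the closure of H_id in SL(2,ℝ)². -/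
/-!
Both halves rest on the sign of `tr A · tr B · tr AB`.

A pair in `H₀` has `tr A · tr B · tr AB > 0`. Indeed, let `I` be an invariant interval, `[v] ∉ I`,
and `ℓ(w) = det(v, w)`. The functional `ℓ` does not vanish on lines in `I`, so for every `M` mapping
`I` into itself the ratio `f_M([w]) = ℓ(M w) / ℓ(w)` is nonzero on `I`, and by connectedness it has
constant sign. Cayley–Hamilton, `ℓ(M² w) + ℓ(w) = tr M · ℓ(M w)`, shows that this sign is the sign
of `tr M`; and `f_{AB}([w]) = f_A([B w]) f_B([w])` gives the claim. Thus the product of traces is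
nonnegative on the closure of `H₀`, and free pairs are twisted.

On `H_id` the product of traces is less than `-8`, so the closure of `H_id` consists of free pairs.
Conversely, write `x = tr A`, `y = tr B`, `z = tr AB`. For small `t > 0` the matrix
`A' = (A - t z B⁻¹) / √D`, with `D = det (A - t z B⁻¹) = 1 - t z² + t² z² < 1`,
has `tr A' = (x - t y z) / √D`, larger than `x` in absolute value because `x y z < 0`, while
`(tr A' B)² - 4 = (z² - 4) / D ≥ z² - 4`. So a free pair can be perturbed to increase `|x|` strictly
without changing `y` or decreasing `|z|`. Since `(A, B) ↦ (B, A)` and `(A, B) ↦ ((AB)⁻¹, A)` permute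
the three traces, three such perturbations lead into `H_id`.
-/


open Matrix

/-! ### Traces -/

section Continuity

theorem continuous_trace2 : Continuous trace2 :=
  Continuous.matrix_trace continuous_subtype_val

theorem continuous_trace2_mul : Continuous fun p : SL2 × SL2 => trace2 (p.1 * p.2) := by
  have h : Continuous fun p : SL2 × SL2 =>
      Matrix.trace ((p.1 : Matrix (Fin 2) (Fin 2) ℝ) * (p.2 : Matrix (Fin 2) (Fin 2) ℝ)) :=
    Continuous.matrix_trace ((continuous_subtype_val.comp continuous_fst).mul
      (continuous_subtype_val.comp continuous_snd))
  exact h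

theorem continuous_traceProd :
    Continuous fun p : SL2 × SL2 => trace2 p.1 * trace2 p.2 * trace2 (p.1 * p.2) :=
  ((continuous_trace2.comp continuous_fst).mul (continuous_trace2.comp continuous_snd)).mul
    continuous_trace2_mul

end Continuity

section Traces

theorem trace2_mul_comm (A B : SL2) : trace2 (A * B) = trace2 (B * A) := by
  simp only [trace2, Matrix.SpecialLinearGroup.coe_mul]
  exact Matrix.trace_mul_comm _ _

theorem trace2_inv (A : SL2) : trace2 A⁻¹ = trace2 A := by
  simp only [trace2, Matrix.SpecialLinearGroup.coe_inv, Matrix.adjugate_fin_two,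
    Matrix.trace_fin_two]
  simp [add_comm]

end Traces

/-! ### The sign of the trace product on `H₀` -/

section Straight

/-- The determinant pairing `det(v, w)` on `ℝ²`. -/
def detPair (v w : Fin 2 → ℝ) : ℝ := v 0 * w 1 - v 1 * w 0

theorem detPair_smul (v w : Fin 2 → ℝ) (c : ℝ) : detPair v (c • w) = c * detPair v w := by
  simp [detPair]; ring

theorem mk_eq_of_detPair_eq_zero {v w : Fin 2 → ℝ} (hv : v ≠ 0) (hw : w ≠ 0)
    (h : detPair v w = 0) : Projectivization.mk ℝ v hv = Projectivization.mk ℝ w hw := by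
  rw [Projectivization.mk_eq_mk_iff']
  simp only [detPair] at h
  by_cases h0 : w 0 = 0
  · have h1 : w 1 ≠ 0 := fun h1 => hw (by ext i; fin_cases i <;> simp [h0, h1])
    refine ⟨v 1 / w 1, ?_⟩
    ext i; fin_cases i
    · have : v 0 * w 1 = 0 := by rw [h0] at h; linarith
      simp [h0, (mul_eq_zero.1 this).resolve_right h1]
    · simp; field_simp
  · refine ⟨v 0 / w 0, ?_⟩
    ext i; fin_cases i
    · simp; field_simp
    · simp; field_simp; linarith

theorem mulVec_ne_zero (M : SL2) {w : Fin 2 → ℝ} (hw : w ≠ 0) :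
    (M : Matrix (Fin 2) (Fin 2) ℝ) *ᵥ w ≠ 0 := by
  intro h
  apply hw
  have h2 := congrArg (fun u => ((M⁻¹ : SL2) : Matrix (Fin 2) (Fin 2) ℝ) *ᵥ u) h
  simp only [Matrix.mulVec_mulVec, ← Matrix.SpecialLinearGroup.coe_mul] at h2
  rwa [inv_mul_cancel, Matrix.SpecialLinearGroup.coe_one, Matrix.one_mulVec,
    Matrix.mulVec_zero] at h2

theorem projAct_mk (M : SL2) {w : Fin 2 → ℝ} (hw : w ≠ 0) :
    projAct M (Projectivization.mk ℝ w hw) =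
      Projectivization.mk ℝ ((M : Matrix (Fin 2) (Fin 2) ℝ) *ᵥ w) (mulVec_ne_zero M hw) := by
  rfl

/-- If `M` preserves a connected `I` avoiding `[v]`, then `ℓ(M w) ℓ(w)` with `ℓ = det(v, ·)` is
nonzero of the same sign for all lines `[w] ∈ I`. -/
theorem sign_const {I : Set P1} (hI : IsPreconnected I) {v : Fin 2 → ℝ} (hv : v ≠ 0)
    (hvI : Projectivization.mk ℝ v hv ∉ I) (M : SL2) (hM : ∀ x ∈ I, projAct M x ∈ I) :
    (∀ w (hw : w ≠ 0), Projectivization.mk ℝ w hw ∈ I →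
      0 < detPair v ((M : Matrix (Fin 2) (Fin 2) ℝ) *ᵥ w) * detPair v w) ∨
    (∀ w (hw : w ≠ 0), Projectivization.mk ℝ w hw ∈ I →
      detPair v ((M : Matrix (Fin 2) (Fin 2) ℝ) *ᵥ w) * detPair v w < 0) := by
  let q : (Fin 2 → ℝ) → ℝ := fun w =>
    detPair v ((M : Matrix (Fin 2) (Fin 2) ℝ) *ᵥ w) * detPair v w
  have hq : Continuous q := by
    simp only [q, detPair, Matrix.mulVec, dotProduct, Fin.sum_univ_two]
    fun_prop
  have hqs : ∀ (c : ℝ) w, q (c • w) = c ^ 2 * q w := by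
    intro c w
    simp only [q, Matrix.mulVec_smul, detPair_smul]; ring
  have hrep : ∀ (w : Fin 2 → ℝ) (hw : w ≠ 0), ∃ c : ℝ, c ≠ 0 ∧
      w = c • (Projectivization.mk ℝ w hw).rep := by
    intro w hw
    obtain ⟨a, ha⟩ := Projectivization.exists_smul_eq_mk_rep ℝ w hw
    refine ⟨((a⁻¹ : ℝˣ) : ℝ), Units.ne_zero _, ?_⟩
    rw [← ha]
    exact (inv_smul_smul a w).symm
  have hpos : ∀ w (hw : w ≠ 0), 0 < q (Projectivization.mk ℝ w hw).rep ↔ 0 < q w := by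
    intro w hw
    obtain ⟨c, hc, h⟩ := hrep w hw
    conv_rhs => rw [h, hqs]
    exact (mul_pos_iff_of_pos_left (by positivity)).symm
  have hneg : ∀ w (hw : w ≠ 0), q (Projectivization.mk ℝ w hw).rep < 0 ↔ q w < 0 := by
    intro w hw
    obtain ⟨c, hc, h⟩ := hrep w hw
    conv_rhs => rw [h, hqs]
    exact lt_iff_lt_of_le_iff_le (mul_nonneg_iff_of_pos_left (by positivity)).symm
  have hUo : IsOpen {x : P1 | 0 < q x.rep} := by
    refine isOpen_coinduced.2 ?_
    have : IsOpen {w : {w : Fin 2 → ℝ // w ≠ 0} | 0 < q w} :=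
      isOpen_lt continuous_const (hq.comp continuous_subtype_val)
    convert this using 1
    ext w
    exact hpos w.1 w.2
  have hVo : IsOpen {x : P1 | q x.rep < 0} := by
    refine isOpen_coinduced.2 ?_
    have : IsOpen {w : {w : Fin 2 → ℝ // w ≠ 0} | q w < 0} :=
      isOpen_lt (hq.comp continuous_subtype_val) continuous_const
    convert this using 1
    ext w
    exact hneg w.1 w.2
  have hne : ∀ (w : Fin 2 → ℝ) (hw : w ≠ 0), Projectivization.mk ℝ w hw ∈ I → detPair v w ≠ 0 := by
    intro w hw hwI h0
    exact hvI (mk_eq_of_detPair_eq_zero hv hw h0 ▸ hwI)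
  have hcov : I ⊆ {x : P1 | 0 < q x.rep} ∪ {x : P1 | q x.rep < 0} := by
    intro x hx
    have hx' : Projectivization.mk ℝ x.rep x.rep_nonzero ∈ I := by rwa [Projectivization.mk_rep]
    have h1 := hne _ _ hx'
    have h2 := hne _ (mulVec_ne_zero M x.rep_nonzero) (projAct_mk M x.rep_nonzero ▸ hM _ hx')
    rcases lt_or_gt_of_ne (mul_ne_zero h2 h1) with h | h
    · exact Or.inr h
    · exact Or.inl h
  have hdis : Disjoint {x : P1 | 0 < q x.rep} {x : P1 | q x.rep < 0} := by
    rw [Set.disjoint_left]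
    intro x h1 h2
    exact lt_asymm (show 0 < q x.rep from h1) h2
  rcases hI.subset_or_subset hUo hVo hdis hcov with h | h
  · exact Or.inl fun w hw hwI => (hpos w hw).1 (h hwI)
  · exact Or.inr fun w hw hwI => (hneg w hw).1 (h hwI)

/-- The sign of `ℓ(M w) / ℓ(w)` on an invariant interval is the sign of `tr M`, by
Cayley–Hamilton. -/
theorem sign_trace {I : Set P1} (hI : IsPreconnected I) {v : Fin 2 → ℝ} (hv : v ≠ 0)
    (hvI : Projectivization.mk ℝ v hv ∉ I) (M : SL2) (hM : ∀ x ∈ I, projAct M x ∈ I)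
    (w : Fin 2 → ℝ) (hw : w ≠ 0) (hwI : Projectivization.mk ℝ w hw ∈ I) :
    0 < trace2 M * (detPair v ((M : Matrix (Fin 2) (Fin 2) ℝ) *ᵥ w) * detPair v w) := by
  have hMw := mulVec_ne_zero M hw
  have hMwI := projAct_mk M hw ▸ hM _ hwI
  have hCH : detPair v ((M : Matrix (Fin 2) (Fin 2) ℝ) *ᵥ
      ((M : Matrix (Fin 2) (Fin 2) ℝ) *ᵥ w)) + detPair v w =
      trace2 M * detPair v ((M : Matrix (Fin 2) (Fin 2) ℝ) *ᵥ w) := by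
    have hd := M.det_coe
    rw [Matrix.det_fin_two] at hd
    simp only [detPair, trace2, Matrix.trace_fin_two, Matrix.mulVec, dotProduct,
      Fin.sum_univ_two]
    linear_combination (v 1 * w 0 - v 0 * w 1) * hd
  set a := detPair v w
  set b := detPair v ((M : Matrix (Fin 2) (Fin 2) ℝ) *ᵥ w)
  set c := detPair v ((M : Matrix (Fin 2) (Fin 2) ℝ) *ᵥ ((M : Matrix (Fin 2) (Fin 2) ℝ) *ᵥ w))
  have key : (c * b) * (b * a) > 0 ∧ a ≠ 0 ∧ b ≠ 0 := by
    rcases sign_const hI hv hvI M hM with h | h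
    · have h1 : 0 < b * a := h w hw hwI
      have h2 : 0 < c * b := h _ hMw hMwI
      exact ⟨mul_pos h2 h1, right_ne_zero_of_mul h1.ne', left_ne_zero_of_mul h1.ne'⟩
    · have h1 : b * a < 0 := h w hw hwI
      have h2 : c * b < 0 := h _ hMw hMwI
      exact ⟨mul_pos_of_neg_of_neg h2 h1, right_ne_zero_of_mul h1.ne, left_ne_zero_of_mul h1.ne⟩
  obtain ⟨k, ha, hb⟩ := key
  have hca : 0 < c * a := by
    have : 0 < b ^ 2 * (c * a) := by linarith
    exact (mul_pos_iff_of_pos_left (by positivity)).1 this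
  have : trace2 M * (b * a) = c * a + a ^ 2 := by linear_combination -a * hCH
  rw [this]; positivity

theorem traceProd_pos_of_mem_H0 {p : SL2 × SL2} (hp : p ∈ H0) :
    0 < trace2 p.1 * trace2 p.2 * trace2 (p.1 * p.2) := by
  obtain ⟨A, B⟩ := p
  obtain ⟨I, ⟨-, hI, hIc⟩, hA, hB⟩ := hp
  have hA : ∀ x ∈ I, projAct A x ∈ I := fun x hx => hA ⟨x, subset_closure hx, rfl⟩
  have hB : ∀ x ∈ I, projAct B x ∈ I := fun x hx => hB ⟨x, subset_closure hx, rfl⟩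
  have hAB : ∀ x ∈ I, projAct (A * B) x ∈ I := by
    intro x hx
    have hx' : Projectivization.mk ℝ x.rep x.rep_nonzero = x := Projectivization.mk_rep x
    have := hA _ (hB _ hx)
    rw [← hx'] at this ⊢
    simp only [projAct_mk, Matrix.mulVec_mulVec] at this
    simpa only [projAct_mk, Matrix.SpecialLinearGroup.coe_mul] using this
  obtain ⟨x, hx⟩ := hI.nonempty
  obtain ⟨y, hy⟩ := hIc.nonempty
  have hp := hI.isPreconnected
  have hy' : Projectivization.mk ℝ y.rep y.rep_nonzero ∉ I := by
    rw [Projectivization.mk_rep]; exact hy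
  have hx' : Projectivization.mk ℝ x.rep x.rep_nonzero ∈ I := by rwa [Projectivization.mk_rep]
  have hBx := projAct_mk B x.rep_nonzero ▸ hB _ hx'
  have s1 := sign_trace hp y.rep_nonzero hy' A hA _ _ hBx
  have s2 := sign_trace hp y.rep_nonzero hy' B hB _ _ hx'
  have s3 := sign_trace hp y.rep_nonzero hy' (A * B) hAB _ _ hx'
  rw [Matrix.mulVec_mulVec, ← Matrix.SpecialLinearGroup.coe_mul] at s1
  set a := detPair y.rep x.rep
  set b := detPair y.rep ((B : Matrix (Fin 2) (Fin 2) ℝ) *ᵥ x.rep)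
  set c := detPair y.rep (((A * B : SL2) : Matrix (Fin 2) (Fin 2) ℝ) *ᵥ x.rep)
  have h := mul_pos (mul_pos s1 s2) s3
  have e : trace2 A * (c * b) * (trace2 B * (b * a)) * (trace2 (A * B) * (c * a)) =
    (trace2 A * trace2 B * trace2 (A * B)) * (a * b * c) ^ 2 := by ring
  rw [e] at h
  exact pos_of_mul_pos_left h (sq_nonneg _)

end Straight

/-! ### Perturbing free pairs into `H_id` -/

section Perturb

/-- A free pair can be perturbed so that `|tr A|` strictly increases, while `tr B` is unchanged and
`|tr AB|` does not decrease. -/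
theorem free_perturb {p : SL2 × SL2} (hp : FreePair p) :
    p ∈ closure {q : SL2 × SL2 | FreePair q ∧ |trace2 p.1| < |trace2 q.1| ∧
      trace2 q.2 = trace2 p.2 ∧ |trace2 (p.1 * p.2)| ≤ |trace2 (q.1 * q.2)|} := by
  obtain ⟨A, B⟩ := p
  obtain ⟨hx, hy, hz, hxyz⟩ := hp
  dsimp only at hx hy hz hxyz ⊢
  set x := trace2 A with hxd
  set y := trace2 B with hyd
  set z := trace2 (A * B) with hzd
  let D : ℝ → ℝ := fun t => 1 - t * z ^ 2 + t ^ 2 * z ^ 2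
  let N : ℝ → Matrix (Fin 2) (Fin 2) ℝ := fun t =>
    (A : Matrix (Fin 2) (Fin 2) ℝ) - (t * z) • ((B⁻¹ : SL2) : Matrix (Fin 2) (Fin 2) ℝ)
  have hdA := A.det_coe
  have hdB := B.det_coe
  rw [Matrix.det_fin_two] at hdA hdB
  have hx' : x = A 0 0 + A 1 1 := Matrix.trace_fin_two _
  have hy' : y = B 0 0 + B 1 1 := Matrix.trace_fin_two _
  have hz' : z = A 0 0 * B 0 0 + A 0 1 * B 1 0 + (A 1 0 * B 0 1 + A 1 1 * B 1 1) := by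
    rw [hzd, trace2, Matrix.trace_fin_two]
    simp [Matrix.mul_apply]
  have hN : ∀ t, (N t).det = D t := by
    intro t
    simp only [N, D, Matrix.SpecialLinearGroup.coe_inv, Matrix.adjugate_fin_two,
      Matrix.det_fin_two, Matrix.sub_apply, Matrix.smul_apply, smul_eq_mul]
    simp
    linear_combination hdA + t ^ 2 * z ^ 2 * hdB + t * z * hz'
  have hNtr : ∀ t, (N t).trace = x - t * z * y := by
    intro t
    simp only [N, Matrix.SpecialLinearGroup.coe_inv, Matrix.adjugate_fin_two,
      Matrix.trace_fin_two, Matrix.sub_apply, Matrix.smul_apply, smul_eq_mul]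
    simp
    linear_combination -hx' + t * z * hy'
  have hNBtr : ∀ t, (N t * (B : Matrix (Fin 2) (Fin 2) ℝ)).trace = z * (1 - 2 * t) := by
    intro t
    have : N t * (B : Matrix (Fin 2) (Fin 2) ℝ) =
        ((A * B : SL2) : Matrix (Fin 2) (Fin 2) ℝ) - (t * z) • 1 := by
      simp only [N, Matrix.sub_mul, Matrix.smul_mul, ← Matrix.SpecialLinearGroup.coe_mul,
        inv_mul_cancel, Matrix.SpecialLinearGroup.coe_one]
    rw [this, Matrix.trace_sub, Matrix.trace_smul]
    change z - _ = _
    simp; ring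
  have hdet : ∀ t, 0 < D t → ((√(D t))⁻¹ • N t).det = 1 := by
    intro t ht
    rw [Matrix.det_smul, hN, Fintype.card_fin, inv_pow, Real.sq_sqrt ht.le]
    exact inv_mul_cancel₀ ht.ne'
  -- `D t > 0` for small `t`; elsewhere the value of `f` is irrelevant.
  let f : ℝ → SL2 := fun t => if h : 0 < D t then ⟨(√(D t))⁻¹ • N t, hdet t h⟩ else A
  have hf : ∀ t, 0 < D t → (f t : Matrix (Fin 2) (Fin 2) ℝ) = (√(D t))⁻¹ • N t := by
    intro t ht
    simp [f, ht]
  have hDc : Continuous D := by fun_prop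
  have hNc : Continuous N := by fun_prop
  have hD0 : D 0 = 1 := by simp [D]
  have hN0 : N 0 = A := by simp [N]
  have hDpos : ∀ᶠ t in nhds (0 : ℝ), 0 < D t :=
    hDc.continuousAt.eventually (lt_mem_nhds (by rw [hD0]; exact one_pos))
  have hlim : Filter.Tendsto f (nhds 0) (nhds A) := by
    refine tendsto_subtype_rng.2 ?_
    have h1 : Filter.Tendsto (fun t => (√(D t))⁻¹ • N t) (nhds 0)
        (nhds (A : Matrix (Fin 2) (Fin 2) ℝ)) := by
      have h2 : ContinuousAt (fun t => (√(D t))⁻¹ • N t) 0 :=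
        ((hDc.sqrt.continuousAt).inv₀ (by simp [hD0])).smul hNc.continuousAt
      simpa [ContinuousAt, hD0, hN0] using h2
    refine h1.congr' ?_
    filter_upwards [hDpos] with t ht using (hf t ht).symm
  have hlim' : Filter.Tendsto (fun t => (f t, B)) (nhdsWithin 0 (Set.Ioi 0)) (nhds (A, B)) :=
    (hlim.mono_left nhdsWithin_le_nhds).prodMk_nhds tendsto_const_nhds
  refine mem_closure_of_tendsto hlim' ?_
  have hsmall : ∀ᶠ t in nhds (0 : ℝ), t < 1 / 2 := gt_mem_nhds (by norm_num)
  filter_upwards [nhdsWithin_le_nhds hDpos, nhdsWithin_le_nhds hsmall, self_mem_nhdsWithin]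
    with t hDt ht2 ht0
  have ht0 : 0 < t := ht0
  have hs : 0 < √(D t) := Real.sqrt_pos.2 hDt
  have hs2 : √(D t) ^ 2 = D t := Real.sq_sqrt hDt.le
  have hx1 : trace2 (f t) = (√(D t))⁻¹ * (x - t * z * y) := by
    rw [trace2, hf t hDt, Matrix.trace_smul, hNtr, smul_eq_mul]
  have hz1 : trace2 (f t * B) = (√(D t))⁻¹ * (z * (1 - 2 * t)) := by
    rw [trace2, Matrix.SpecialLinearGroup.coe_mul, hf t hDt, Matrix.smul_mul, Matrix.trace_smul,
      hNBtr, smul_eq_mul]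
  have hz0 : z ≠ 0 := by rintro h; rw [h] at hz; norm_num at hz
  have hzz : 0 < z ^ 2 := by positivity
  have hD1 : D t < 1 := by
    have : 0 < t * (1 - t) * z ^ 2 := mul_pos (mul_pos ht0 (by linarith)) hzz
    simp only [D]; linarith
  have hz4 : 4 ≤ z ^ 2 := by
    have := sq_le_sq.2 (by simpa using hz : |(2:ℝ)| ≤ |z|)
    linarith
  have hsi : 0 < (√(D t))⁻¹ := inv_pos.2 hs
  have hsi2 : (√(D t))⁻¹ ^ 2 = (D t)⁻¹ := by rw [inv_pow, hs2]
  have hx2 : |x| < |trace2 (f t)| := by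
    rw [← sq_lt_sq, hx1, mul_pow, hsi2, inv_mul_eq_div, lt_div_iff₀ hDt]
    have h1 : 0 < t * -(x * y * z) := mul_pos ht0 (by linarith)
    nlinarith [sq_nonneg (t * z * y), sq_nonneg x]
  have hz2 : |z| ≤ |trace2 (f t * B)| := by
    rw [← sq_le_sq, hz1, mul_pow, hsi2, inv_mul_eq_div, le_div_iff₀ hDt]
    have h1 : 0 ≤ (z ^ 2 - 4) * (1 - D t) := mul_nonneg (by linarith) (by linarith)
    have h2 : (z * (1 - 2 * t)) ^ 2 = z ^ 2 - 4 + 4 * D t := by simp only [D]; ring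
    rw [h2]; linarith
  refine ⟨⟨hx.trans hx2.le, hy, hz.trans hz2, ?_⟩, hx2, rfl, hz2⟩
  change trace2 (f t) * y * trace2 (f t * B) < 0
  rw [hx1, hz1]
  have e : (√(D t))⁻¹ * (x - t * z * y) * y * ((√(D t))⁻¹ * (z * (1 - 2 * t))) =
      (√(D t))⁻¹ ^ 2 * ((x * y * z - t * (z * y) ^ 2) * (1 - 2 * t)) := by ring
  rw [e]
  refine mul_neg_of_pos_of_neg (by positivity) (mul_neg_of_neg_of_pos ?_ (by linarith))
  have : 0 ≤ t * (z * y) ^ 2 := by positivity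
  linarith

theorem freePair_swap {A B : SL2} : FreePair (B, A) ↔ FreePair (A, B) := by
  simp only [FreePair, trace2_mul_comm B A, mul_comm (trace2 B) (trace2 A)]
  tauto

theorem trace2_rot (A B : SL2) : trace2 ((A * B)⁻¹ * A) = trace2 B := by
  rw [_root_.mul_inv_rev, inv_mul_cancel_right, trace2_inv]

theorem freePair_rot {A B : SL2} : FreePair ((A * B)⁻¹, A) ↔ FreePair (A, B) := by
  simp only [FreePair, trace2_rot, trace2_inv]
  rw [show trace2 (A * B) * trace2 A * trace2 B = trace2 A * trace2 B * trace2 (A * B) by ring]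
  tauto

/-- Continuity of the inverse of the rotation `(A, B) ↦ ((AB)⁻¹, A)`. -/
theorem continuous_unrot : Continuous fun p : SL2 × SL2 => (p.2, (p.1 * p.2)⁻¹) := by
  refine continuous_snd.prodMk (Continuous.subtype_mk (f := fun p : SL2 × SL2 =>
    Matrix.adjugate ((p.1 : Matrix (Fin 2) (Fin 2) ℝ) * (p.2 : Matrix (Fin 2) (Fin 2) ℝ))) ?_ _)
  exact Continuous.matrix_adjugate ((continuous_subtype_val.comp continuous_fst).mul
      (continuous_subtype_val.comp continuous_snd))

theorem free_subset_closure_Hid : {p | FreePair p} ⊆ closure Hid := by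
  -- The three traces are made larger than `2` in absolute value one after another, in the order
  -- `A`, `B`, `AB`; each perturbation keeps the strict inequalities already obtained.
  have h1 : {p : SL2 × SL2 | FreePair p} ⊆ closure {p | FreePair p ∧ 2 < |trace2 p.1|} := by
    intro p hp
    refine closure_mono ?_ (free_perturb hp)
    exact fun q hq => ⟨hq.1, hp.1.trans_lt hq.2.1⟩
  have h2 : {p : SL2 × SL2 | FreePair p ∧ 2 < |trace2 p.1|} ⊆
      closure {p | FreePair p ∧ 2 < |trace2 p.1| ∧ 2 < |trace2 p.2|} := by
    rintro ⟨A, B⟩ ⟨hp, hx⟩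
    refine map_mem_closure (f := Prod.swap) (x := (B, A)) continuous_swap
      (free_perturb (freePair_swap.2 hp)) ?_
    rintro ⟨P, Q⟩ ⟨hf, hlt, heq, -⟩
    exact ⟨freePair_swap.2 hf, by dsimp at heq ⊢; rwa [heq], hp.2.1.trans_lt hlt⟩
  have h3 : {p : SL2 × SL2 | FreePair p ∧ 2 < |trace2 p.1| ∧ 2 < |trace2 p.2|} ⊆
      closure Hid := by
    rintro ⟨A, B⟩ ⟨hp, hx, hy⟩
    have key := map_mem_closure (t := Hid) continuous_unrot (free_perturb (freePair_rot.2 hp)) ?_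
    · simpa [_root_.mul_inv_rev] using key
    rintro ⟨P, Q⟩ ⟨hf, hlt, heq, hle⟩
    simp only [trace2_rot, trace2_inv] at hlt heq hle
    have hQP : trace2 (Q * (P * Q)⁻¹) = trace2 P := by
      rw [_root_.mul_inv_rev, mul_inv_cancel_left, trace2_inv]
    refine ⟨by dsimp; rwa [heq], ?_, ?_, ?_⟩
    · dsimp; rw [trace2_inv]; exact hy.trans_le hle
    · dsimp; rw [hQP]; exact hp.2.2.1.trans_lt hlt
    · have := hf.2.2.2
      dsimp at this ⊢; rw [hQP, trace2_inv]; linarith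
  refine h1.trans (closure_minimal (h2.trans (closure_minimal h3 isClosed_closure)) isClosed_closure)

theorem traceProd_lt_of_mem_Hid {p : SL2 × SL2} (hp : p ∈ Hid) :
    trace2 p.1 * trace2 p.2 * trace2 (p.1 * p.2) < -8 := by
  obtain ⟨h1, h2, h3, h4⟩ := hp
  have : 8 < |trace2 p.1 * trace2 p.2 * trace2 (p.1 * p.2)| := by
    rw [abs_mul, abs_mul]
    have : 4 < |trace2 p.1| * |trace2 p.2| := by nlinarith
    nlinarith
  rw [abs_of_neg h4] at this
  linarith

end Perturb

/-- **Free pairs are twisted, and they form the closure of `H_id`**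
(Lemma 3.11 of Avila–Bochi–Yoccoz). -/
theorem free_twisted_closure :
    (∀ p : SL2 × SL2, FreePair p → Twisted p) ∧
    (∀ p : SL2 × SL2, FreePair p ↔ p ∈ closure Hid) := by
  refine ⟨fun p hp => ⟨hp.1, hp.2.1, fun hs => ?_⟩, fun p => ⟨fun hp =>
    free_subset_closure_Hid hp, fun hp => ?_⟩⟩
  · have : p ∈ {q : SL2 × SL2 | 0 ≤ trace2 q.1 * trace2 q.2 * trace2 (q.1 * q.2)} :=
      closure_minimal (fun q hq => (traceProd_pos_of_mem_H0 hq).le)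
        (isClosed_le continuous_const continuous_traceProd) hs
    exact absurd hp.2.2.2 (not_lt.2 this)
  · have h1 : p ∈ {q : SL2 × SL2 | 2 ≤ |trace2 q.1|} :=
      closure_minimal (fun q hq => hq.1.le)
        (isClosed_le continuous_const (continuous_trace2.comp continuous_fst).abs) hp
    have h2 : p ∈ {q : SL2 × SL2 | 2 ≤ |trace2 q.2|} :=
      closure_minimal (fun q hq => hq.2.1.le)
        (isClosed_le continuous_const (continuous_trace2.comp continuous_snd).abs) hp
    have h3 : p ∈ {q : SL2 × SL2 | 2 ≤ |trace2 (q.1 * q.2)|} :=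
      closure_minimal (fun q hq => hq.2.2.1.le)
        (isClosed_le continuous_const continuous_trace2_mul.abs) hp
    have h4 : p ∈ {q : SL2 × SL2 | trace2 q.1 * trace2 q.2 * trace2 (q.1 * q.2) ≤ -8} :=
      closure_minimal (fun q hq => (traceProd_lt_of_mem_Hid hq).le)
        (isClosed_le continuous_traceProd continuous_const) hp
    exact ⟨h1, h2, h3, lt_of_le_of_lt h4 (by norm_num)⟩
end
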